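/- Let N ≥ 1, K > 0, and for each n = 1,…,N let c_n : ℝ → ℝ be convex, strictly increasing and differentiable on [0, ∞) with c_n(0) ≥ 0, and let ĉ_n(s) = (1 + s/K)·c_n(s) − (1/K)·∫₀^s c_n(x) dx. Let F ⊆ [0, ∞)^N and suppose M_1,…,M_N are real numbers such that every s ∈ F satisfies s_n ≤ M_n for all n. Let s* ∈ F minimize ∑_{n=1}^N c_n(s_n) over F and let s** ∈ F minimize ∑_{n=1}^N ĉ_n(s_n) over F. Then ∑_{n=1}^N c_n(s**_n) ≤ (1 + (max_n M_n)/K) · ∑_{n=1}^N c_n(s*_n). -/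

import Mathlib

/-!
The modified cost is `c s` plus `1 / K` times the area `s * c s - ∫ x in 0..s, c x` between the
graph of `c` on `[0, s]` and the horizontal line at height `c s`. For `c` nonnegative and
nondecreasing this area lies between `0` and `s * c s`, so the modified cost lies between `c s` and
`(1 + s / K) * c s`. A profile whose total modified cost is at most that of `t` therefore has a true
cost within the factor `1 + (max t) / K` of that of `t`.
-/

open Set

/-- The modified cost `ĉ` of a cost function `c` with parameter `K`, whose total is minimized by the
equilibrium supply profile. It is meant for `0 < K`; for `K = 0` the convention `x / 0 = 0` makes it
`c` itself. -/
noncomputable def modifiedCost (K : ℝ) (c : ℝ → ℝ) (s : ℝ) : ℝ :=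
  (1 + s / K) * c s - (1 / K) * ∫ x in (0 : ℝ)..s, c x

theorem integral_le_sub_mul_of_monotoneOn {f : ℝ → ℝ} {a b : ℝ} (hab : a ≤ b)
    (hf : MonotoneOn f (Icc a b)) : ∫ x in a..b, f x ≤ (b - a) * f b := by
  have hint : IntervalIntegrable f MeasureTheory.volume a b :=
    MonotoneOn.intervalIntegrable (by rwa [uIcc_of_le hab])
  calc ∫ x in a..b, f x
      ≤ ∫ _ in a..b, f b :=
        intervalIntegral.integral_mono_on hab hint intervalIntegrable_const
          fun x hx => hf hx (right_mem_Icc.mpr hab) hx.2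
    _ = (b - a) * f b := intervalIntegral.integral_const (f b)

section

variable {K s : ℝ} {c : ℝ → ℝ}

theorem le_modifiedCost (hK : 0 < K) (hs : 0 ≤ s) (hc : MonotoneOn c (Icc 0 s)) :
    c s ≤ modifiedCost K c s := by
  have area_nonneg : 0 ≤ s * c s - ∫ x in (0 : ℝ)..s, c x := by
    simpa using integral_le_sub_mul_of_monotoneOn hs hc
  calc c s
      ≤ c s + (1 / K) * (s * c s - ∫ x in (0 : ℝ)..s, c x) :=
        le_add_of_nonneg_right (by positivity)
    _ = modifiedCost K c s := by
        unfold modifiedCost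
        ring

theorem modifiedCost_le_mul (hK : 0 < K) (hs : 0 ≤ s) (hc : ∀ x ∈ Icc 0 s, 0 ≤ c x) :
    modifiedCost K c s ≤ (1 + s / K) * c s := by
  have integral_nonneg : 0 ≤ ∫ x in (0 : ℝ)..s, c x := intervalIntegral.integral_nonneg hs hc
  exact sub_le_self _ (by positivity)

end

theorem poa_upper_bound_abstract_general {ι : Type*} [Fintype ι] {K B : ℝ} (hK : 0 < K)
    {c : ι → ℝ → ℝ} (hmono : ∀ n, MonotoneOn (c n) (Ici 0)) (hc0 : ∀ n, 0 ≤ c n 0)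
    {s t : ι → ℝ} (hs : ∀ n, 0 ≤ s n) (ht : ∀ n, 0 ≤ t n) (htB : ∀ n, t n ≤ B)
    (hst : ∑ n, modifiedCost K (c n) (s n) ≤ ∑ n, modifiedCost K (c n) (t n)) :
    ∑ n, c n (s n) ≤ (1 + B / K) * ∑ n, c n (t n) := by
  have cost_nonneg (n : ι) (x : ℝ) (hx : 0 ≤ x) : 0 ≤ c n x :=
    (hc0 n).trans (hmono n self_mem_Ici hx hx)
  calc ∑ n, c n (s n)
      ≤ ∑ n, modifiedCost K (c n) (s n) :=
        Finset.sum_le_sum fun n _ =>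
          le_modifiedCost hK (hs n) ((hmono n).mono Icc_subset_Ici_self)
    _ ≤ ∑ n, modifiedCost K (c n) (t n) := hst
    _ ≤ ∑ n, (1 + t n / K) * c n (t n) :=
        Finset.sum_le_sum fun n _ =>
          modifiedCost_le_mul hK (ht n) fun x hx => cost_nonneg n x hx.1
    _ ≤ ∑ n, (1 + B / K) * c n (t n) := by
        gcongr with n
        · exact cost_nonneg n (t n) (ht n)
        · exact htB n
    _ = (1 + B / K) * ∑ n, c n (t n) := (Finset.mul_sum ..).symm

/-- Abstract form of the price-of-anarchy upper bound (Theorem 1): if `M n` bounds the `n`-th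
component of every feasible supply profile, `s*` minimizes the true total cost over `F` and
`s**` minimizes the total modified cost over `F`, then
`∑ n, c n (s** n) ≤ (1 + (max_n M n)/K) · ∑ n, c n (s* n)`. -/
theorem poa_upper_bound_abstract
    (N : ℕ) (hN : 1 ≤ N) (K : ℝ) (hK : 0 < K)
    (c : Fin N → ℝ → ℝ)
    (hconv : ∀ n, ConvexOn ℝ (Set.Ici (0 : ℝ)) (c n))
    (hmono : ∀ n, StrictMonoOn (c n) (Set.Ici (0 : ℝ)))
    (hdiff : ∀ n, DifferentiableOn ℝ (c n) (Set.Ici (0 : ℝ)))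
    (hc0 : ∀ n, 0 ≤ c n 0)
    (chat : Fin N → ℝ → ℝ)
    (hchat : ∀ n s, chat n s = (1 + s / K) * c n s - (1 / K) * ∫ x in (0:ℝ)..s, c n x)
    (F : Set (Fin N → ℝ))
    (hFpos : ∀ s ∈ F, ∀ n, 0 ≤ s n)
    (M : Fin N → ℝ)
    (hM : ∀ s ∈ F, ∀ n, s n ≤ M n)
    (sStar sStarStar : Fin N → ℝ)
    (hsStar : sStar ∈ F) (hsStarStar : sStarStar ∈ F)
    (hminStar : ∀ t ∈ F, ∑ n, c n (sStar n) ≤ ∑ n, c n (t n))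
    (hminStarStar : ∀ t ∈ F, ∑ n, chat n (sStarStar n) ≤ ∑ n, chat n (t n)) :
    ∑ n, c n (sStarStar n) ≤
      (1 + (Finset.univ.sup' (Finset.univ_nonempty_iff.mpr
        (Fin.pos_iff_nonempty.mp hN)) M) / K) * ∑ n, c n (sStar n) := by
  obtain rfl : chat = fun n => modifiedCost K (c n) := funext₂ hchat
  exact poa_upper_bound_abstract_general hK (fun n => (hmono n).monotoneOn) hc0
    (hFpos _ hsStarStar) (hFpos _ hsStar)
    (fun n => (hM _ hsStar n).trans (Finset.le_sup' M (Finset.mem_univ n)))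
    (hminStarStar _ hsStar)
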